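/- arXiv:2401.09926 — 5 statements merged into one kernel-verified Lean document; each statement's English description precedes it below -/
import Mathlib

section
/- For every dimension N ≥ 1, every σ ∈ (0,2), and every j ∈ ℤ^N with j ≠ 0, the function t ↦ G(j,t)·t^{-1-σ/2} is Lebesgue integrable on (0,∞) and its integral is nonnegative; consequently the weight κ_{σ,h,j} = h^{-σ}·|Γ(-σ/2)|^{-1}·∫_0^∞ G(j,t) t^{-1-σ/2} dt is finite and nonnegative for every h > 0. -/
/-!
Each factor `e^{-2t} I_m(2t)` lies in `[0, 1]` for `t ≥ 0`: the series of `I_m(2t)` is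
`∑ (t^k / k!) (t^{k+m} / (k+m)!)`, and the second fraction is at most `e^t`, which leaves the
exponential series for the first. For `m ≥ 1` the second fraction is also at most `t e^t`
(split off one power of `t`), so the factor is at most `t`. As `j ≠ 0`, some `|j_i| ≥ 1`, and
hence `0 ≤ G(j,t) ≤ min 1 t` (`G_nonneg`, `G_le_one`, `G_le_self`). The integrand is therefore
dominated by `t^{-σ/2}` on `(0,1]` and by `t^{-1-σ/2}` on `(1,∞)`, both integrable when
`0 < σ < 2`.
-/

open MeasureTheory Real Set

/-- Modified Bessel function of the first kind of integer order `m`. -/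
noncomputable def besselI (m : ℕ) (s : ℝ) : ℝ :=
  ∑' k : ℕ, (s / 2) ^ (2 * k + m) / ((Nat.factorial k : ℝ) * (Nat.factorial (k + m)))

/-- `G(j,t) = e^{-2Nt} ∏_i I_{|j_i|}(2t)`. -/
noncomputable def G (N : ℕ) (j : Fin N → ℤ) (t : ℝ) : ℝ :=
  Real.exp (-(2 * (N : ℝ)) * t) * ∏ i, besselI (j i).natAbs (2 * t)

lemma summable_besselI (m : ℕ) (s : ℝ) :
    Summable fun k : ℕ =>
      (s / 2) ^ (2 * k + m) / ((Nat.factorial k : ℝ) * (Nat.factorial (k + m))) := by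
  refine Summable.of_norm_bounded
    (g := fun k : ℕ => |s / 2| ^ k / (Nat.factorial k : ℝ) * Real.exp |s / 2|)
    ((Real.summable_pow_div_factorial _).mul_right _) fun k => ?_
  have h := Real.pow_div_factorial_le_exp |s / 2| (abs_nonneg _) (k + m)
  have e : ‖(s / 2) ^ (2 * k + m) / ((Nat.factorial k : ℝ) * (Nat.factorial (k + m)))‖
      = |s / 2| ^ k / (Nat.factorial k : ℝ) *
        (|s / 2| ^ (k + m) / (Nat.factorial (k + m) : ℝ)) := by
    rw [Real.norm_eq_abs, abs_div, abs_pow, abs_mul, Nat.abs_cast, Nat.abs_cast,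
      div_mul_div_comm, ← pow_add]
    congr 2
    ring
  rw [e]
  gcongr

lemma measurable_besselI (m : ℕ) : Measurable (besselI m) := by
  refine measurable_of_tendsto_metrizable
    (f := fun (n : ℕ) (s : ℝ) => ∑ k ∈ Finset.range n,
      (s / 2) ^ (2 * k + m) / ((Nat.factorial k : ℝ) * (Nat.factorial (k + m))))
    (fun n => by fun_prop) (tendsto_pi_nhds.2 fun s => ?_)
  exact (summable_besselI m s).hasSum.tendsto_sum_nat

lemma besselI_nonneg (m : ℕ) {s : ℝ} (hs : 0 ≤ s) : 0 ≤ besselI m s :=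
  tsum_nonneg fun _ => by positivity

/-- A common bound `c` for the Taylor terms of `e^t` of order at least `m` bounds `I_m(2t)` by
`c e^t`, since `I_m(2t)` pairs them with the terms of a second exponential series. -/
lemma besselI_le_of_forall (m : ℕ) {t c : ℝ} (ht : 0 ≤ t)
    (h : ∀ k : ℕ, t ^ (k + m) / (Nat.factorial (k + m) : ℝ) ≤ c) :
    besselI m (2 * t) ≤ Real.exp t * c := by
  have hexp : ∑' k : ℕ, t ^ k / (Nat.factorial k : ℝ) = Real.exp t := by
    rw [Real.exp_eq_exp_ℝ, NormedSpace.exp_eq_tsum_div]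
  rw [← hexp, ← tsum_mul_right]
  refine (summable_besselI m _).tsum_le_tsum (fun k => ?_)
    ((Real.summable_pow_div_factorial t).mul_right c)
  have e : (2 * t / 2) ^ (2 * k + m) / ((Nat.factorial k : ℝ) * (Nat.factorial (k + m)))
      = t ^ k / (Nat.factorial k : ℝ) * (t ^ (k + m) / (Nat.factorial (k + m) : ℝ)) := by
    rw [div_mul_div_comm, ← pow_add, mul_div_cancel_left₀ t two_ne_zero]
    congr 2
    ring
  rw [e]
  exact mul_le_mul_of_nonneg_left (h k) (by positivity)

lemma exp_mul_besselI_le_one (m : ℕ) {t : ℝ} (ht : 0 ≤ t) :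
    Real.exp (-2 * t) * besselI m (2 * t) ≤ 1 := by
  calc Real.exp (-2 * t) * besselI m (2 * t)
      ≤ Real.exp (-2 * t) * (Real.exp t * Real.exp t) := by
        gcongr
        exact besselI_le_of_forall m ht fun k => Real.pow_div_factorial_le_exp t ht _
    _ = 1 := by rw [← Real.exp_add, ← Real.exp_add]; simp; ring

lemma exp_mul_besselI_le_self {m : ℕ} (hm : m ≠ 0) {t : ℝ} (ht : 0 ≤ t) :
    Real.exp (-2 * t) * besselI m (2 * t) ≤ t := by
  obtain ⟨n, rfl⟩ := Nat.exists_eq_succ_of_ne_zero hm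
  have key : ∀ k : ℕ, t ^ (k + n.succ) / (Nat.factorial (k + n.succ) : ℝ)
      ≤ t * Real.exp t := fun k => by
    calc t ^ (k + n.succ) / (Nat.factorial (k + n.succ) : ℝ)
        ≤ t ^ (k + n.succ) / (Nat.factorial (k + n) : ℝ) := by
          gcongr
          exact Nat.le_succ n
      _ = t * (t ^ (k + n) / (Nat.factorial (k + n) : ℝ)) := by
          rw [Nat.succ_eq_add_one, ← add_assoc, pow_succ]; ring
      _ ≤ t * Real.exp t := by
          gcongr
          exact Real.pow_div_factorial_le_exp t ht _
  calc Real.exp (-2 * t) * besselI n.succ (2 * t)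
      ≤ Real.exp (-2 * t) * (Real.exp t * (t * Real.exp t)) := by
        gcongr
        exact besselI_le_of_forall _ ht key
    _ = Real.exp (-2 * t + t + t) * t := by rw [Real.exp_add, Real.exp_add]; ring
    _ = t := by rw [show -2 * t + t + t = 0 by ring]; simp

lemma G_eq_prod (N : ℕ) (j : Fin N → ℤ) (t : ℝ) :
    G N j t = ∏ i, (Real.exp (-2 * t) * besselI (j i).natAbs (2 * t)) := by
  rw [G, Finset.prod_mul_distrib, Finset.prod_const, Finset.card_univ, Fintype.card_fin,
    ← Real.exp_nat_mul]
  congr 2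
  ring

lemma G_nonneg (N : ℕ) (j : Fin N → ℤ) {t : ℝ} (ht : 0 ≤ t) : 0 ≤ G N j t :=
  mul_nonneg (Real.exp_pos _).le
    (Finset.prod_nonneg fun _ _ => besselI_nonneg _ (by positivity))

lemma G_le_one (N : ℕ) (j : Fin N → ℤ) {t : ℝ} (ht : 0 ≤ t) : G N j t ≤ 1 := by
  rw [G_eq_prod]
  exact Finset.prod_le_one
    (fun i _ => mul_nonneg (Real.exp_pos _).le (besselI_nonneg _ (by positivity)))
    fun i _ => exp_mul_besselI_le_one _ ht

lemma G_le_self {N : ℕ} {j : Fin N → ℤ} (hj : j ≠ 0) {t : ℝ} (ht : 0 ≤ t) :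
    G N j t ≤ t := by
  obtain ⟨i, hi⟩ := Function.ne_iff.1 hj
  have h0 : ∀ l, 0 ≤ Real.exp (-2 * t) * besselI (j l).natAbs (2 * t) := fun l =>
    mul_nonneg (Real.exp_pos _).le (besselI_nonneg _ (by positivity))
  rw [G_eq_prod, ← Finset.mul_prod_erase _ _ (Finset.mem_univ i)]
  exact (mul_le_of_le_one_right (h0 i) (Finset.prod_le_one (fun l _ => h0 l)
    fun l _ => exp_mul_besselI_le_one _ ht)).trans
    (exp_mul_besselI_le_self (Int.natAbs_ne_zero.2 hi) ht)

lemma measurable_G (N : ℕ) (j : Fin N → ℤ) : Measurable (G N j) := by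
  unfold G
  have := fun i => (measurable_besselI (j i).natAbs).comp (measurable_const_mul (2 : ℝ))
  exact (by fun_prop : Measurable fun t : ℝ => Real.exp (-(2 * (N : ℝ)) * t)).mul
    (Finset.measurable_prod _ fun i _ => this i)

lemma integrableOn_G_mul_rpow {N : ℕ} {σ : ℝ} (hσ : σ ∈ Set.Ioo (0 : ℝ) 2)
    {j : Fin N → ℤ} (hj : j ≠ 0) :
    IntegrableOn (fun t : ℝ => G N j t * t ^ (-1 - σ / 2)) (Set.Ioi 0) := by
  obtain ⟨h0, h2⟩ := hσ
  have hmeas : Measurable fun t : ℝ => G N j t * t ^ (-1 - σ / 2) :=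
    (measurable_G N j).mul (measurable_id.pow_const _)
  rw [← Set.Ioc_union_Ioi_eq_Ioi zero_le_one]
  refine IntegrableOn.union ?_ ?_
  · have hI : IntegrableOn (fun t : ℝ => t ^ (-σ / 2)) (Set.Ioc 0 1) :=
      (intervalIntegrable_iff_integrableOn_Ioc_of_le zero_le_one).1
        (intervalIntegral.intervalIntegrable_rpow' (by linarith))
    refine Integrable.mono' hI hmeas.aestronglyMeasurable
      (ae_restrict_of_forall_mem measurableSet_Ioc fun t ht => ?_)
    rw [Real.norm_of_nonneg (mul_nonneg (G_nonneg N j ht.1.le) (Real.rpow_nonneg ht.1.le _))]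
    calc G N j t * t ^ (-1 - σ / 2) ≤ t * t ^ (-1 - σ / 2) :=
          mul_le_mul_of_nonneg_right (G_le_self hj ht.1.le) (Real.rpow_nonneg ht.1.le _)
      _ = t ^ (-σ / 2) := by
          rw [← Real.rpow_one_add' ht.1.le (by linarith)]
          congr 1
          ring
  · have hI : IntegrableOn (fun t : ℝ => t ^ (-1 - σ / 2)) (Set.Ioi 1) :=
      integrableOn_Ioi_rpow_of_lt (by linarith) one_pos
    refine Integrable.mono' hI hmeas.aestronglyMeasurable
      (ae_restrict_of_forall_mem measurableSet_Ioi fun t ht => ?_)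
    have ht0 : (0 : ℝ) ≤ t := zero_le_one.trans (le_of_lt ht)
    rw [Real.norm_of_nonneg (mul_nonneg (G_nonneg N j ht0) (Real.rpow_nonneg ht0 _))]
    exact mul_le_of_le_one_left (Real.rpow_nonneg ht0 _) (G_le_one N j ht0)

/-- for `N ≥ 1`, `σ ∈ (0,2)`, `j ≠ 0`, the function
`t ↦ G(j,t) t^{-1-σ/2}` is integrable on `(0,∞)` with nonnegative integral, and the
weight `κ_{σ,h,j}` is nonnegative (hence finite) for every `h > 0`. -/
theorem stmt_0 (N : ℕ) (hN : 1 ≤ N) (σ : ℝ) (hσ : σ ∈ Set.Ioo (0 : ℝ) 2)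
    (j : Fin N → ℤ) (hj : j ≠ 0) :
    IntegrableOn (fun t : ℝ => G N j t * t ^ (-1 - σ / 2)) (Set.Ioi 0) ∧
    0 ≤ ∫ t in Set.Ioi (0 : ℝ), G N j t * t ^ (-1 - σ / 2) ∧
    ∀ h : ℝ, 0 < h →
      0 ≤ h ^ (-σ) * |Real.Gamma (-σ / 2)|⁻¹ *
        ∫ t in Set.Ioi (0 : ℝ), G N j t * t ^ (-1 - σ / 2) := by
  have hint : 0 ≤ ∫ t in Set.Ioi (0 : ℝ), G N j t * t ^ (-1 - σ / 2) :=
    setIntegral_nonneg measurableSet_Ioi fun t ht =>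
      mul_nonneg (G_nonneg N j (le_of_lt ht)) (Real.rpow_nonneg (le_of_lt ht) _)
  exact ⟨integrableOn_G_mul_rpow hσ hj, hint, fun h hh =>
    mul_nonneg (mul_nonneg (Real.rpow_nonneg hh.le _) (by positivity)) hint⟩
end

section
/- For every dimension N ≥ 1 and every t ≥ 0, the family (G(j,t))_{j ∈ ℤ^N} consists of nonnegative numbers, is summable, and ∑_{j ∈ ℤ^N} G(j,t) = 1. -/
/-!
In dimension one the claim is the generating function identity
`∑_{m ∈ ℤ} I_{|m|}(2t) = e^{2t}`. It comes from expanding `e^t * e^t` as the double series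
`∑_{a,b} t^a/a! * t^b/b!`, all of whose terms are nonnegative for `t ≥ 0`, and regrouping it along
the diagonals `a - b = m`: with `k = min a b`, the terms of the diagonal `m` are exactly those of
the series defining `I_{|m|}(2t)` (`hasSum_besselI`). In dimension `N` the sum of the products over
`ℤ^N` is the product of the `N` one-dimensional sums, by nonnegativity (`hasSum_pi_prod`), so it
equals `e^{2Nt}`, which the prefactor cancels.
-/

open MeasureTheory Real Set

/-- Regrouping of pairs of naturals along diagonals: `(a, b)` corresponds to
`(a - b, min a b)`. -/
def diagEquiv : ℤ × ℕ ≃ ℕ × ℕ where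
  toFun p := (p.2 + p.1.toNat, p.2 + (-p.1).toNat)
  invFun q := ((q.1 : ℤ) - q.2, min q.1 q.2)
  left_inv := by
    rintro ⟨m, k⟩
    ext <;> simp <;> omega
  right_inv := by
    rintro ⟨a, b⟩
    ext <;> simp <;> omega

/-- The `k`-th term of the double series for `e^t * e^t` along the diagonal `m` is the `k`-th term
of the series defining `I_{|m|}(2t)`. -/
lemma diagEquiv_term (t : ℝ) (m : ℤ) (k : ℕ) :
    t ^ (diagEquiv (m, k)).1 / ((diagEquiv (m, k)).1.factorial : ℝ) *
      (t ^ (diagEquiv (m, k)).2 / ((diagEquiv (m, k)).2.factorial : ℝ)) =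
    (2 * t / 2) ^ (2 * k + m.natAbs) /
      ((Nat.factorial k : ℝ) * (Nat.factorial (k + m.natAbs))) := by
  have h2 : 2 * t / 2 = t := by ring
  rw [h2, div_mul_div_comm, ← pow_add]
  rcases le_total 0 m with hm | hm
  · have h1 : m.toNat = m.natAbs := by omega
    have h3 : (-m).toNat = 0 := by omega
    simp only [diagEquiv, Equiv.coe_fn_mk, h1, h3, add_zero]
    rw [mul_comm (Nat.factorial k : ℝ)]
    congr 2
    omega
  · have h1 : m.toNat = 0 := by omega
    have h3 : (-m).toNat = m.natAbs := by omega
    simp only [diagEquiv, Equiv.coe_fn_mk, h1, h3, add_zero]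
    congr 2
    omega

lemma hasSum_besselI {t : ℝ} (ht : 0 ≤ t) :
    HasSum (fun m : ℤ => besselI m.natAbs (2 * t)) (Real.exp (2 * t)) := by
  have he : HasSum (fun n : ℕ => t ^ n / (n.factorial : ℝ)) (Real.exp t) := by
    rw [Real.exp_eq_exp_ℝ]
    exact NormedSpace.expSeries_div_hasSum_exp t
  have hnn : (0 : ℕ → ℝ) ≤ fun n : ℕ => t ^ n / (n.factorial : ℝ) := fun n => by
    simp only [Pi.zero_apply]; positivity
  have h := he.mul he (he.summable.mul_of_nonneg he.summable hnn hnn)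
  rw [← Real.exp_add, ← two_mul, ← diagEquiv.hasSum_iff] at h
  refine h.prod_fiberwise fun m => ?_
  simpa only [Function.comp_apply, diagEquiv_term, besselI] using
    (h.summable.prod_factor m).hasSum

/-- A nonnegative summable family, multiplied over the coordinates, sums over `ι^N` to the `N`-th
power of its sum. -/
lemma hasSum_pi_prod {ι : Type*} {f : ι → ℝ} {a : ℝ} (hf : ∀ m, 0 ≤ f m) (h : HasSum f a)
    (N : ℕ) : HasSum (fun j : Fin N → ι => ∏ i, f (j i)) (a ^ N) := by
  induction N with
  | zero => simp
  | succ n ih =>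
    have hs : Summable fun p : ι × (Fin n → ι) => f p.1 * ∏ i, f (p.2 i) :=
      h.summable.mul_of_nonneg (g := fun j : Fin n → ι => ∏ i, f (j i)) ih.summable hf
        fun j => Finset.prod_nonneg fun i _ => hf (j i)
    rw [pow_succ', ← (Fin.consEquiv fun _ : Fin (n + 1) => ι).hasSum_iff]
    have he : (fun j : Fin (n + 1) → ι => ∏ i, f (j i)) ∘
        (Fin.consEquiv fun _ : Fin (n + 1) => ι) = fun p => f p.1 * ∏ i, f (p.2 i) := by
      funext p
      simp [Fin.consEquiv, Fin.prod_univ_succ]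
    rw [he]
    exact HasSum.mul (f := f) (g := fun j : Fin n → ι => ∏ i, f (j i)) h ih hs

/-- for every `N ≥ 1` and `t ≥ 0`, the family `(G(j,t))_{j ∈ ℤ^N}` is
nonnegative, summable, and sums to `1`. -/
theorem stmt_1 (N : ℕ) (hN : 1 ≤ N) (t : ℝ) (ht : 0 ≤ t) :
    (∀ j : Fin N → ℤ, 0 ≤ G N j t) ∧
    Summable (fun j : Fin N → ℤ => G N j t) ∧
    ∑' j : Fin N → ℤ, G N j t = 1 := by
  have hb : ∀ m : ℤ, 0 ≤ besselI m.natAbs (2 * t) := fun m => besselI_nonneg _ (by positivity)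
  have h : HasSum (fun j : Fin N → ℤ => G N j t) 1 := by
    have h1 := (hasSum_pi_prod hb (hasSum_besselI ht) N).mul_left
      (Real.exp (-(2 * (N : ℝ)) * t))
    have h2 : Real.exp (-(2 * (N : ℝ)) * t) * Real.exp (2 * t) ^ N = 1 := by
      rw [← Real.exp_nat_mul, ← Real.exp_add, Real.exp_eq_one_iff]
      ring
    rwa [h2] at h1
  exact ⟨fun j => mul_nonneg (Real.exp_pos _).le (Finset.prod_nonneg fun i _ => hb (j i)),
    h.summable, h.tsum_eq⟩
end

section
/- Let N ≥ 1, h > 0, T > 0. Let E : ℝ^N × [0,T] → ℝ be bounded and continuous with E(x,0) = 0 for all x, such that for each x the map t ↦ E(x,t) is differentiable on [0,T], and let g : ℝ^N × [0,T] → ℝ be bounded and continuous. If ∂_t E(x,t) = Δ_h E(x,t) − g(x,t) for all (x,t) ∈ ℝ^N × [0,T], then for every t ∈ [0,T], sup_{x∈ℝ^N} |E(x,t)| ≤ ∫_0^t sup_{x∈ℝ^N} |g(x,s)| ds. -/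
/-!
Put `L = 2N/h²`, so that `Δ_h u + L u` is the positive operator `∑ (u(x+he_k) + u(x-he_k))/h²`, which
maps functions bounded by `B` to functions bounded by `L B`. Write `Φ(t) = ∫₀ᵗ sup_y |g(y,s)| ds`.

The proof is a contraction argument (`discHeat_step`): if `|E| ≤ Φ + S` on `[0,T]`, then
`|E| ≤ Φ + (1 - e^{-LT}) S` there. Iterating from the a priori bound `|E| ≤ C` gives `|E| ≤ Φ`.
For the step, fix `x` and `t`, and put `φ(s) = ∫₀ˢ |g(x,r)| dr`. The difference `Φ - φ` is monotone, so
`|E(·,s)| ≤ φ(s) + K` for `s ≤ t`, where `K = Φ(t) - φ(t) + S`. Since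
`(e^{Ls} E(x,s))' = e^{Ls} ((Δ_h + L) E - g)`, its absolute value is at most
`e^{Ls} (L φ(s) + L K + |g(x,s)|) = (e^{Ls} φ(s) + K (e^{Ls} - 1))'`, and integrating gives
`|E(x,t)| ≤ φ(t) + K (1 - e^{-Lt})`. Comparing with the `C¹` function `φ` avoids
differentiating `Φ`, whose integrand is only lower semicontinuous (whence its integrability).
-/

open MeasureTheory Real Set

/-- The discrete Laplacian `Δ_h φ(x) = ∑_k (φ(x+h e_k) − 2φ(x) + φ(x−h e_k))/h²`. -/
noncomputable def discLap (N : ℕ) (h : ℝ) (φ : (Fin N → ℝ) → ℝ) (x : Fin N → ℝ) : ℝ :=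
  ∑ k : Fin N,
    (φ (x + h • (Pi.single k 1 : Fin N → ℝ)) - 2 * φ x
      + φ (x - h • (Pi.single k 1 : Fin N → ℝ))) / h ^ 2

lemma abs_discLap_add_le (N : ℕ) (h : ℝ) (u : (Fin N → ℝ) → ℝ) (x : Fin N → ℝ)
    (B : ℝ) (hu : ∀ y, |u y| ≤ B) :
    |discLap N h u x + 2 * N / h ^ 2 * u x| ≤ 2 * N / h ^ 2 * B := by
  have key : discLap N h u x + 2 * N / h ^ 2 * u x = ∑ k : Fin N,
      (u (x + h • (Pi.single k 1 : Fin N → ℝ)) + u (x - h • (Pi.single k 1 : Fin N → ℝ)))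
        / h ^ 2 := by
    have : 2 * N / h ^ 2 * u x = ∑ _k : Fin N, 2 * u x / h ^ 2 := by
      simp only [Finset.sum_const, Finset.card_univ, Fintype.card_fin, nsmul_eq_mul]
      ring
    rw [this, discLap, ← Finset.sum_add_distrib]
    refine Finset.sum_congr rfl fun k _ => ?_
    ring
  rw [key]
  calc _ ≤ ∑ k : Fin N, |(u (x + h • (Pi.single k 1 : Fin N → ℝ))
          + u (x - h • (Pi.single k 1 : Fin N → ℝ))) / h ^ 2| := Finset.abs_sum_le_sum_abs _ _
    _ ≤ ∑ _k : Fin N, (B + B) / h ^ 2 := by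
      refine Finset.sum_le_sum fun k _ => ?_
      rw [abs_div, abs_of_nonneg (sq_nonneg h)]
      gcongr
      exact (abs_add_le _ _).trans (add_le_add (hu _) (hu _))
    _ = _ := by
      simp only [Finset.sum_const, Finset.card_univ, Fintype.card_fin, nsmul_eq_mul]
      ring

/-- The supremum is lower semicontinuous in time, hence measurable, and it is bounded. -/
lemma intervalIntegrable_iSup_abs {N : ℕ} {T : ℝ} (hT : 0 < T) {g : (Fin N → ℝ) → ℝ → ℝ}
    (hgc : Continuous fun p : (Fin N → ℝ) × ℝ => g p.1 p.2) {C : ℝ}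
    (hgb : ∀ x t, t ∈ Set.Icc (0 : ℝ) T → |g x t| ≤ C) {a b : ℝ}
    (ha : a ∈ Set.Icc 0 T) (hb : b ∈ Set.Icc 0 T) :
    IntervalIntegrable (fun s => ⨆ y, |g y s|) volume a b := by
  -- Clamping time to `[0,T]` makes the supremum finite for every real time.
  let p : ℝ → ℝ := fun s => max 0 (min s T)
  have hp : Continuous p := by fun_prop
  have hpm : ∀ s, p s ∈ Set.Icc 0 T := fun s =>
    ⟨le_max_left _ _, max_le hT.le (min_le_right _ _)⟩
  have hpe : ∀ s ∈ Set.Icc 0 T, p s = s := fun s hs => by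
    simp only [p, min_eq_left hs.2, max_eq_right hs.1]
  have hbdd : ∀ s, BddAbove (Set.range fun y => |g y (p s)|) := fun s =>
    ⟨C, by rintro _ ⟨y, rfl⟩; exact hgb y _ (hpm s)⟩
  have hlsc : LowerSemicontinuous fun s => ⨆ y, |g y (p s)| := by
    refine lowerSemicontinuous_ciSup hbdd fun y => Continuous.lowerSemicontinuous ?_
    exact (hgc.comp (continuous_const.prodMk hp)).abs
  have hint : IntervalIntegrable (fun s => ⨆ y, |g y (p s)|) volume a b := by
    have hC : IntervalIntegrable (fun _ : ℝ => C) volume a b := intervalIntegrable_const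
    refine hC.mono_fun hlsc.measurable.aestronglyMeasurable
      (Filter.Eventually.of_forall fun s => ?_)
    have h0 : 0 ≤ ⨆ y, |g y (p s)| := Real.iSup_nonneg fun y => abs_nonneg _
    have h1 : ⨆ y, |g y (p s)| ≤ C := ciSup_le fun y => hgb y _ (hpm s)
    simp only [Real.norm_eq_abs]
    rw [abs_of_nonneg h0]
    exact h1.trans (le_abs_self C)
  refine hint.congr ?_
  intro s hs
  have hsT : s ∈ Set.Icc 0 T :=
    Set.uIcc_subset_Icc ha hb (Set.uIoc_subset_uIcc hs)
  simp only [hpe s hsT]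

/-- One step of the iteration: the excess `S` over the Duhamel bound shrinks by the factor
`1 - e^{-LT}`, where `L = 2N/h²`. -/
lemma discHeat_step (N : ℕ) (h : ℝ) (T : ℝ) (hT : 0 < T)
    (E g : (Fin N → ℝ) → ℝ → ℝ)
    (hE0 : ∀ x, E x 0 = 0)
    (hgc : Continuous fun p : (Fin N → ℝ) × ℝ => g p.1 p.2)
    (C : ℝ) (hgb : ∀ x t, t ∈ Set.Icc (0 : ℝ) T → |g x t| ≤ C)
    (hpde : ∀ x, ∀ t ∈ Set.Icc (0 : ℝ) T,
      HasDerivWithinAt (E x) (discLap N h (fun y => E y t) x - g x t) (Set.Icc 0 T) t)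
    (S : ℝ) (hS : 0 ≤ S)
    (hE : ∀ t ∈ Set.Icc (0 : ℝ) T, ∀ x, |E x t| ≤ (∫ s in (0 : ℝ)..t, ⨆ y, |g y s|) + S) :
    ∀ t ∈ Set.Icc (0 : ℝ) T, ∀ x, |E x t| ≤
      (∫ s in (0 : ℝ)..t, ⨆ y, |g y s|) + (1 - Real.exp (-(2 * N / h ^ 2 * T))) * S := by
  intro t ht x
  set L : ℝ := 2 * N / h ^ 2 with hL
  have hL0 : 0 ≤ L := by positivity
  have h0T : (0 : ℝ) ∈ Set.Icc 0 T := ⟨le_rfl, hT.le⟩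
  set Φ : ℝ → ℝ := fun t => ∫ s in (0 : ℝ)..t, ⨆ y, |g y s| with hΦ
  let φ : ℝ → ℝ := fun t => ∫ s in (0 : ℝ)..t, |g x s|
  have hgx : Continuous fun s => |g x s| :=
    (hgc.comp (continuous_const.prodMk continuous_id)).abs
  have hφ : ∀ s, HasDerivAt φ |g x s| s := fun s =>
    hgx.integral_hasStrictDerivAt 0 s |>.hasDerivAt
  have hmono : ∀ s ∈ Set.Icc 0 T, ∀ r ∈ Set.Icc 0 T, s ≤ r → Φ s - φ s ≤ Φ r - φ r := by
    intro s hs r hr hsr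
    have e1 : Φ r - Φ s = ∫ q in s..r, ⨆ y, |g y q| :=
      intervalIntegral.integral_interval_sub_left
        (intervalIntegrable_iSup_abs hT hgc hgb h0T hr)
        (intervalIntegrable_iSup_abs hT hgc hgb h0T hs)
    have e2 : φ r - φ s = ∫ q in s..r, |g x q| :=
      intervalIntegral.integral_interval_sub_left
        (hgx.intervalIntegrable _ _) (hgx.intervalIntegrable _ _)
    have e3 : ∫ q in s..r, |g x q| ≤ ∫ q in s..r, ⨆ y, |g y q| := by
      refine intervalIntegral.integral_mono_on hsr (hgx.intervalIntegrable _ _)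
        (intervalIntegrable_iSup_abs hT hgc hgb hs hr) fun q hq => ?_
      have hqT : q ∈ Set.Icc 0 T := ⟨hs.1.trans hq.1, hq.2.trans hr.2⟩
      exact le_ciSup (f := fun y => |g y q|)
        ⟨C, by rintro _ ⟨y, rfl⟩; exact hgb y _ hqT⟩ x
    linarith
  have hψ0 : 0 ≤ Φ t - φ t := by
    have := hmono 0 h0T t ht ht.1
    simpa [hΦ, φ] using this
  let K : ℝ := Φ t - φ t + S
  have hexp : ∀ s, HasDerivAt (fun s => Real.exp (L * s)) (Real.exp (L * s) * L) s := fun s => by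
    simpa using ((hasDerivAt_id s).const_mul L).exp
  have hmain := image_norm_le_of_norm_deriv_right_le_deriv_boundary
    (f := fun s => Real.exp (L * s) * E x s)
    (f' := fun s => Real.exp (L * s) * L * E x s
      + Real.exp (L * s) * (discLap N h (fun y => E y s) x - g x s))
    (B := fun s => Real.exp (L * s) * φ s + K * (Real.exp (L * s) - 1))
    (B' := fun s => Real.exp (L * s) * L * φ s + Real.exp (L * s) * |g x s|
      + K * (Real.exp (L * s) * L)) (a := 0) (b := t)
    (by
      intro s hs
      have hsT : s ∈ Set.Icc 0 T := ⟨hs.1, hs.2.trans ht.2⟩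
      exact (((hexp s).hasDerivWithinAt.mul (hpde x s hsT)).continuousWithinAt).mono
        (Set.Icc_subset_Icc_right ht.2))
    (by
      intro s hs
      have hsT : s ∈ Set.Icc 0 T := ⟨hs.1, hs.2.le.trans ht.2⟩
      refine ((hexp s).hasDerivWithinAt.mul (hpde x s hsT)).mono_of_mem_nhdsWithin ?_
      exact Filter.mem_of_superset (Icc_mem_nhdsGE (hs.2.trans_le ht.2))
        (Set.Icc_subset_Icc_left hs.1))
    (by simp [hE0, φ])
    (by
      intro s
      exact ((hexp s).mul (hφ s)).add (((hexp s).sub_const 1).const_mul K))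
    (by
      intro s hs
      have hsT : s ∈ Set.Icc 0 T := ⟨hs.1, hs.2.le.trans ht.2⟩
      have hB : ∀ y, |E y s| ≤ φ s + K := fun y => by
        have h1 := hE s hsT y
        have h2 := hmono s hsT t ht hs.2.le
        have h3 : |E y s| ≤ Φ s + S := h1
        simp only [K]
        linarith
      have hA := abs_discLap_add_le N h (fun y => E y s) x _ hB
      rw [← hL] at hA
      have e : Real.exp (L * s) * L * E x s
          + Real.exp (L * s) * (discLap N h (fun y => E y s) x - g x s)
          = Real.exp (L * s) * ((discLap N h (fun y => E y s) x + L * E x s) - g x s) := by ring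
      rw [e, norm_mul, Real.norm_eq_abs, Real.norm_eq_abs, abs_of_pos (Real.exp_pos _)]
      calc _ ≤ Real.exp (L * s) * (L * (φ s + K) + |g x s|) := by
            gcongr
            exact (abs_sub _ _).trans (add_le_add hA le_rfl)
        _ = _ := by ring)
  have hfin := hmain (Set.right_mem_Icc.2 ht.1)
  rw [norm_mul, Real.norm_eq_abs, Real.norm_eq_abs, abs_of_pos (Real.exp_pos _)] at hfin
  have hdiv : |E x t| ≤ φ t + K * (1 - Real.exp (-(L * t))) := by
    have hee : Real.exp (L * t) * Real.exp (-(L * t)) = 1 := by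
      rw [← Real.exp_add]; simp
    refine le_of_mul_le_mul_left (hfin.trans (le_of_eq ?_)) (Real.exp_pos (L * t))
    linear_combination K * hee
  have hq1 : Real.exp (-(L * T)) ≤ Real.exp (-(L * t)) :=
    Real.exp_le_exp.2 (neg_le_neg (mul_le_mul_of_nonneg_left ht.2 hL0))
  have hq2 : 0 < Real.exp (-(L * t)) := Real.exp_pos _
  have hS' := mul_le_mul_of_nonneg_right hq1 hS
  have hψ' := mul_nonneg hψ0 hq2.le
  simp only [K] at hdiv
  show |E x t| ≤ Φ t + _
  linarith

/-- comparison/Duhamel bound for the semi-discrete heat equation with source: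
if `E` is bounded, continuous, `E(·,0) = 0`, and `∂_t E = Δ_h E − g` on `ℝ^N × [0,T]`,
then `sup_x |E(x,t)| ≤ ∫_0^t sup_x |g(x,s)| ds`. -/
theorem stmt_8 (N : ℕ) (hN : 1 ≤ N) (h : ℝ) (hh : 0 < h) (T : ℝ) (hT : 0 < T)
    (E g : (Fin N → ℝ) → ℝ → ℝ)
    (hEc : Continuous fun p : (Fin N → ℝ) × ℝ => E p.1 p.2)
    (hEb : ∃ C : ℝ, ∀ x t, t ∈ Set.Icc (0 : ℝ) T → |E x t| ≤ C)
    (hE0 : ∀ x, E x 0 = 0)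
    (hgc : Continuous fun p : (Fin N → ℝ) × ℝ => g p.1 p.2)
    (hgb : ∃ C : ℝ, ∀ x t, t ∈ Set.Icc (0 : ℝ) T → |g x t| ≤ C)
    (hpde : ∀ x, ∀ t ∈ Set.Icc (0 : ℝ) T,
      HasDerivWithinAt (E x) (discLap N h (fun y => E y t) x - g x t) (Set.Icc 0 T) t) :
    ∀ t ∈ Set.Icc (0 : ℝ) T, ∀ x, |E x t| ≤ ∫ s in (0 : ℝ)..t, ⨆ y, |g y s| := by
  obtain ⟨C, hC⟩ := hEb
  obtain ⟨D, hD⟩ := hgb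
  set q : ℝ := 1 - Real.exp (-(2 * N / h ^ 2 * T)) with hq
  have hL0 : 0 ≤ 2 * (N : ℝ) / h ^ 2 * T := by positivity
  have hq0 : 0 ≤ q := sub_nonneg.2 (Real.exp_le_one_iff.2 (neg_nonpos.2 hL0))
  have hq1 : q < 1 := sub_lt_self _ (Real.exp_pos _)
  have hiter : ∀ n : ℕ, ∀ t ∈ Set.Icc (0 : ℝ) T, ∀ x,
      |E x t| ≤ (∫ s in (0 : ℝ)..t, ⨆ y, |g y s|) + q ^ n * |C| := by
    intro n
    induction n with
    | zero =>
      intro t ht x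
      have h0 : 0 ≤ ∫ s in (0 : ℝ)..t, ⨆ y, |g y s| :=
        intervalIntegral.integral_nonneg ht.1 fun s _ => Real.iSup_nonneg fun y => abs_nonneg _
      have h1 := (hC x t ht).trans (le_abs_self C)
      simpa using h1.trans (le_add_of_nonneg_left h0)
    | succ n ih =>
      intro t ht x
      have := discHeat_step N h T hT E g hE0 hgc D hD hpde (q ^ n * |C|) (by positivity) ih t ht x
      rw [← hq] at this
      rw [pow_succ']
      linarith
  intro t ht x
  have hlim : Filter.Tendsto (fun n : ℕ => (∫ s in (0 : ℝ)..t, ⨆ y, |g y s|) + q ^ n * |C|)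
      Filter.atTop (nhds ((∫ s in (0 : ℝ)..t, ⨆ y, |g y s|) + 0 * |C|)) :=
    ((tendsto_pow_atTop_nhds_zero_of_lt_one hq0 hq1).mul_const _).const_add _
  have := ge_of_tendsto' hlim fun n => hiter n t ht x
  simpa using this
end

section
/- (Comparison principle for the explicit scheme.) Let N ≥ 1 and let (κ_j)_{j∈ℤ^N\{0}} be nonnegative summable weights with total mass S_κ = ∑_{j≠0} κ_j. Let F : ℝ → ℝ satisfy assumption (A1) with constant L_F > 0, let τ > 0 satisfy the CFL condition τ·L_F·S_κ ≤ 1, and let f : ℤ^N × ℕ → ℝ. Suppose (U^n)_{n≥0} and (V^n)_{n≥0} are families of bounded grid functions ℤ^N → ℝ such that for all i and n, U^{n+1}_i ≤ U^n_i + τ·[F((L U^n)_i) + f^n_i] and V^{n+1}_i ≥ V^n_i + τ·[F((L V^n)_i) + f^n_i]. If U^0_i ≤ V^0_i for all i ∈ ℤ^N, then U^n_i ≤ V^n_i for all n ≥ 0 and all i ∈ ℤ^N. -/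
/-!
One step of the scheme is monotone, and the comparison follows by induction on the time index.
If `U ≤ V`, then `(L U)_i - (L V)_i ≤ S_κ (V_i - U_i)` (`Lop_sub_Lop_le`), and the right-hand side
is nonnegative. The assumption on `F` turns this into
`τ (F ((L U)_i) - F ((L V)_i)) ≤ τ L_F S_κ (V_i - U_i)`, which the CFL condition bounds by
`V_i - U_i`. Hence the update of `U` at `i` stays below that of `V`.
-/

open MeasureTheory Real Set

/-- The nonlocal operator `(L V)_i = ∑_{j≠0} (V_{i+j} − V_i) κ_j` on grid functions. -/
noncomputable def Lop (N : ℕ) (κ : (Fin N → ℤ) → ℝ) (V : (Fin N → ℤ) → ℝ)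
    (i : Fin N → ℤ) : ℝ :=
  ∑' j : {j : Fin N → ℤ // j ≠ 0}, (V (i + j.1) - V i) * κ j.1

/-- For a bounded grid function the series defining `Lop` converges, so its value is not the
junk value of `tsum`. -/
lemma summable_Lop {N : ℕ} {κ : (Fin N → ℤ) → ℝ} (hκ : ∀ j, 0 ≤ κ j)
    (hsum : Summable fun j : {j : Fin N → ℤ // j ≠ 0} => κ j.1)
    {W : (Fin N → ℤ) → ℝ} (hW : ∃ C : ℝ, ∀ i, |W i| ≤ C) (i : Fin N → ℤ) :
    Summable fun j : {j : Fin N → ℤ // j ≠ 0} => (W (i + j.1) - W i) * κ j.1 := by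
  obtain ⟨C, hC⟩ := hW
  refine Summable.of_norm_bounded (hsum.mul_left (2 * C)) fun j => ?_
  rw [Real.norm_eq_abs, abs_mul, abs_of_nonneg (hκ j.1)]
  refine mul_le_mul_of_nonneg_right ?_ (hκ j.1)
  linarith [abs_sub (W (i + j.1)) (W i), hC (i + j.1), hC i]

/-- If `U ≤ V`, then passing from `V` to `U` can raise `L` at `i` only through the diagonal term
`-S_κ U_i`, hence by at most `S_κ (V_i - U_i)`. -/
lemma Lop_sub_Lop_le {N : ℕ} {κ : (Fin N → ℤ) → ℝ} (hκ : ∀ j, 0 ≤ κ j)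
    (hsum : Summable fun j : {j : Fin N → ℤ // j ≠ 0} => κ j.1)
    {U V : (Fin N → ℤ) → ℝ} (hU : ∃ C : ℝ, ∀ i, |U i| ≤ C) (hV : ∃ C : ℝ, ∀ i, |V i| ≤ C)
    (h : ∀ i, U i ≤ V i) (i : Fin N → ℤ) :
    Lop N κ U i - Lop N κ V i ≤ (V i - U i) * ∑' j : {j : Fin N → ℤ // j ≠ 0}, κ j.1 := by
  have sU := summable_Lop hκ hsum hU i
  have sV := summable_Lop hκ hsum hV i
  rw [Lop, Lop, ← sU.tsum_sub sV, ← tsum_mul_left]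
  refine (sU.sub sV).tsum_le_tsum (fun j => ?_) (hsum.mul_left _)
  nlinarith [mul_nonneg (sub_nonneg.2 (h (i + j.1))) (hκ j.1)]

/-- comparison principle for the explicit scheme: under assumption (A1)
and the CFL condition `τ L_F S_κ ≤ 1`, bounded sub- and supersolutions of the scheme
are ordered whenever their initial data are. -/
theorem stmt_10 (N : ℕ) (hN : 1 ≤ N)
    (κ : (Fin N → ℤ) → ℝ) (hκ : ∀ j, 0 ≤ κ j)
    (hsum : Summable fun j : {j : Fin N → ℤ // j ≠ 0} => κ j.1)
    (F : ℝ → ℝ) (LF : ℝ) (hLF : 0 < LF)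
    (hF : ∀ l₁ l₂ : ℝ, F l₁ - F l₂ ≤ LF * max (l₁ - l₂) 0)
    (τ : ℝ) (hτ : 0 < τ)
    (hCFL : τ * LF * (∑' j : {j : Fin N → ℤ // j ≠ 0}, κ j.1) ≤ 1)
    (f : (Fin N → ℤ) → ℕ → ℝ)
    (U V : ℕ → (Fin N → ℤ) → ℝ)
    (hUb : ∀ n, ∃ C : ℝ, ∀ i, |U n i| ≤ C)
    (hVb : ∀ n, ∃ C : ℝ, ∀ i, |V n i| ≤ C)
    (hU : ∀ n i, U (n + 1) i ≤ U n i + τ * (F (Lop N κ (U n) i) + f i n))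
    (hV : ∀ n i, V n i + τ * (F (Lop N κ (V n) i) + f i n) ≤ V (n + 1) i)
    (h0 : ∀ i, U 0 i ≤ V 0 i) :
    ∀ n i, U n i ≤ V n i := by
  intro n
  induction n with
  | zero => exact h0
  | succ n ih =>
    intro i
    have hd : 0 ≤ V n i - U n i := sub_nonneg.2 (ih i)
    have hS : 0 ≤ ∑' j : {j : Fin N → ℤ // j ≠ 0}, κ j.1 := tsum_nonneg fun j => hκ j.1
    have hmax : max (Lop N κ (U n) i - Lop N κ (V n) i) 0 ≤
        (V n i - U n i) * ∑' j : {j : Fin N → ℤ // j ≠ 0}, κ j.1 :=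
      max_le (Lop_sub_Lop_le hκ hsum (hUb n) (hVb n) ih i) (mul_nonneg hd hS)
    have hstep : τ * (F (Lop N κ (U n) i) - F (Lop N κ (V n) i)) ≤ V n i - U n i :=
      calc τ * (F (Lop N κ (U n) i) - F (Lop N κ (V n) i))
          ≤ τ * (LF * ((V n i - U n i) * ∑' j : {j : Fin N → ℤ // j ≠ 0}, κ j.1)) :=
            mul_le_mul_of_nonneg_left
              ((hF _ _).trans (mul_le_mul_of_nonneg_left hmax hLF.le)) hτ.le
        _ = τ * LF * (∑' j : {j : Fin N → ℤ // j ≠ 0}, κ j.1) * (V n i - U n i) := by ring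
        _ ≤ V n i - U n i := mul_le_of_le_one_left hd hCFL
    linarith [hU n i, hV n i]
end

section
/- (Barles–Souganidis monotonicity of the scheme function.) Let N ≥ 1, h > 0, τ > 0, T > τ, let (κ_j)_{j∈ℤ^N\{0}} be nonnegative summable weights with total mass S_κ, let F satisfy assumption (A1) with L_F > 0 and suppose τ·L_F·S_κ ≤ 1, and let f : ℝ^N × [0,T] → ℝ and u₀ : ℝ^N → ℝ be given. Define S(h,x,t,r,u) = (r − u(x,t−τ))/τ − F( ∑_{j≠0} (u(x+hj, t−τ) − u(x,t−τ)) κ_j ) − f(x,t−τ) for t ∈ [τ,T], and S(h,x,t,r,u) = r − u₀(x) for t ∈ [0,τ). Then: (i) for fixed x, t and bounded u : ℝ^N × [0,T] → ℝ, r ↦ S(h,x,t,r,u) is nondecreasing; and (ii) if u, v : ℝ^N × [0,T] → ℝ are bounded with u(y,s) ≤ v(y,s) for all (y,s), then S(h,x,t,r,u) ≥ S(h,x,t,r,v) for all x, t, r. -/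
/-! Monotonicity in `r` is immediate since `τ > 0`. For monotonicity in `u`, let `u ≤ v` and
`d = v(x, t - τ) - u(x, t - τ) ≥ 0`. Boundedness makes both series converge, and comparing them term
by term, discarding the nonpositive contributions `u - v` at the neighbours `x + h j`, shows that the
argument of `F` for `u` exceeds the one for `v` by at most `d S_κ`. The one-sided Lipschitz bound on
`F` then costs at most `L_F S_κ d`, which the CFL condition absorbs into the gain `d / τ` of the
time-difference term. -/

open MeasureTheory Real Set

/-- The Barles–Souganidis scheme function `S(h,x,t,r,u)`. -/
noncomputable def Sfun (N : ℕ) (h τ : ℝ) (κ : (Fin N → ℤ) → ℝ) (F : ℝ → ℝ)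
    (f : (Fin N → ℝ) → ℝ → ℝ) (u₀ : (Fin N → ℝ) → ℝ)
    (x : Fin N → ℝ) (t r : ℝ) (u : (Fin N → ℝ) → ℝ → ℝ) : ℝ :=
  if τ ≤ t then
    (r - u x (t - τ)) / τ -
      F (∑' j : {j : Fin N → ℤ // j ≠ 0},
          (u (fun i => x i + h * ((j.1 i : ℤ) : ℝ)) (t - τ) - u x (t - τ)) * κ j.1) -
      f x (t - τ)
  else r - u₀ x

/-- Boundedness of `w` makes the nonlocal sum of differences converge. -/
theorem summable_diff_mul {ι α : Type*} {k : ι → ℝ} (hk : ∀ j, 0 ≤ k j) (hs : Summable k)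
    (w : α → ℝ) (hw : ∃ C : ℝ, ∀ y, |w y| ≤ C) (p : ι → α) (x : α) :
    Summable fun j => (w (p j) - w x) * k j := by
  obtain ⟨C, hC⟩ := hw
  refine Summable.of_norm_bounded (hs.mul_left (C + C)) fun j => ?_
  rw [Real.norm_eq_abs, abs_mul, abs_of_nonneg (hk j)]
  exact mul_le_mul_of_nonneg_right
    ((abs_sub _ _).trans (add_le_add (hC _) (hC _))) (hk j)

/-- For `u ≤ v`, the nonlocal sums differ by at most the total mass times the gap at the centre. -/
theorem tsum_diff_mul_sub_le {ι α : Type*} {k : ι → ℝ} (hk : ∀ j, 0 ≤ k j) (hs : Summable k)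
    (u v : α → ℝ) (hu : ∃ C : ℝ, ∀ y, |u y| ≤ C) (hv : ∃ C : ℝ, ∀ y, |v y| ≤ C)
    (huv : ∀ y, u y ≤ v y) (p : ι → α) (x : α) :
    (∑' j, (u (p j) - u x) * k j) - (∑' j, (v (p j) - v x) * k j) ≤
      (v x - u x) * ∑' j, k j := by
  have su := summable_diff_mul hk hs u hu p x
  have sv := summable_diff_mul hk hs v hv p x
  rw [← su.tsum_sub sv, ← tsum_mul_left]
  refine (su.sub sv).tsum_le_tsum (fun j => ?_) (hs.mul_left _)
  nlinarith [mul_nonneg (sub_nonneg.2 (huv (p j))) (hk j)]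

/-- Barles–Souganidis monotonicity of the scheme function: `S` is
nondecreasing in `r` and nonincreasing in `u` (on bounded functions), under the CFL
condition `τ L_F S_κ ≤ 1`. -/
theorem stmt_12 (N : ℕ) (hN : 1 ≤ N) (h τ T : ℝ) (hh : 0 < h) (hτ : 0 < τ) (hT : τ < T)
    (κ : (Fin N → ℤ) → ℝ) (hκ : ∀ j, 0 ≤ κ j)
    (hsum : Summable fun j : {j : Fin N → ℤ // j ≠ 0} => κ j.1)
    (F : ℝ → ℝ) (LF : ℝ) (hLF : 0 < LF)
    (hF : ∀ l₁ l₂ : ℝ, F l₁ - F l₂ ≤ LF * max (l₁ - l₂) 0)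
    (hCFL : τ * LF * (∑' j : {j : Fin N → ℤ // j ≠ 0}, κ j.1) ≤ 1)
    (f : (Fin N → ℝ) → ℝ → ℝ) (u₀ : (Fin N → ℝ) → ℝ) :
    ((∀ (u : (Fin N → ℝ) → ℝ → ℝ), (∃ C : ℝ, ∀ y s, |u y s| ≤ C) →
      ∀ (x : Fin N → ℝ) (t : ℝ), t ∈ Set.Icc 0 T → ∀ r₁ r₂ : ℝ, r₁ ≤ r₂ →
        Sfun N h τ κ F f u₀ x t r₁ u ≤ Sfun N h τ κ F f u₀ x t r₂ u) ∧
    (∀ (u v : (Fin N → ℝ) → ℝ → ℝ),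
      (∃ C : ℝ, ∀ y s, |u y s| ≤ C) → (∃ C : ℝ, ∀ y s, |v y s| ≤ C) →
      (∀ y s, u y s ≤ v y s) →
      ∀ (x : Fin N → ℝ) (t : ℝ), t ∈ Set.Icc 0 T → ∀ r : ℝ,
        Sfun N h τ κ F f u₀ x t r v ≤ Sfun N h τ κ F f u₀ x t r u)) := by
  refine ⟨fun u _ x t _ r₁ r₂ hr => ?_, fun u v ⟨Cu, hu⟩ ⟨Cv, hv⟩ huv x t _ r => ?_⟩
  · unfold Sfun
    split_ifs
    · gcongr
    · gcongr
  · unfold Sfun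
    split_ifs
    · set s := t - τ
      have hd : 0 ≤ v x s - u x s := sub_nonneg.2 (huv x s)
      have hS : 0 ≤ ∑' j : {j : Fin N → ℤ // j ≠ 0}, κ j.1 := tsum_nonneg fun j => hκ j.1
      have key := tsum_diff_mul_sub_le (fun j : {j : Fin N → ℤ // j ≠ 0} => hκ j.1) hsum
        (fun y => u y s) (fun y => v y s) ⟨Cu, fun y => hu y s⟩ ⟨Cv, fun y => hv y s⟩
        (fun y => huv y s) (fun j i => x i + h * ((j.1 i : ℤ) : ℝ)) x
      have hFuv := (hF _ _).trans
        (mul_le_mul_of_nonneg_left (max_le key (mul_nonneg hd hS)) hLF.le)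
      have hcfl : LF * ((v x s - u x s) * ∑' j : {j : Fin N → ℤ // j ≠ 0}, κ j.1) ≤
          (v x s - u x s) / τ := by
        rw [le_div_iff₀ hτ]
        nlinarith [mul_le_mul_of_nonneg_left hCFL hd]
      have hsplit : (r - u x s) / τ - (r - v x s) / τ = (v x s - u x s) / τ := by ring
      linarith
    · exact le_rfl
end
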